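/- arXiv:2103.10028 — 3 statements merged into one kernel-verified Lean document; each statement's English description precedes it below -/
import Mathlib

section
/- For each time t = 0,…,T there exists a function e_t : Δ(𝒳_t × 𝓛_t^{[1,2]}) × 𝓛_t^{[1,2]} → Δ(𝒳_t), not depending on the strategies, such that along every realization of positive probability, Π_t^1 = e_t(Π_t^2, L_t^{[1,2]}). Concretely, for any joint distribution π² on 𝒳_t × 𝓛_t^{[1,2]} and any l with positive marginal probability under π², e_t(π², l)(x) = π²(x, l) / Σ_{x'} π²(x', l), and with this e_t the stated identity holds. -/
/-!
Common framework: a two-agent sequential dynamic team with nested information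
structure (Dave & Malikopoulos, "Structural results for decentralized
stochastic control with a nested information structure").

* `X t` : state space at time `t`; `U1 t`, `U2 t` : action spaces of agents 1 and 2;
* `W t` : disturbance; `V1 t`, `V2 t` : measurement noises; `Y1 t`, `Y2 t` : observations.
* Dynamics `X_{t+1} = f t X_t U¹_t U²_t W_t`, observations `Y^k_t = h^k t X_t V^k_t`.
* Memories `M²_t = (Y²_{0:t}, U²_{0:t-1})`, `L_t^{[1,2]} = (Y¹_{0:t}, U¹_{0:t-1})`,
  `M¹_t = (L_t^{[1,2]}, M²_t)` (nested information).
* The primitive random variables are independent with given PMFs; the sample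
  space for horizon `T` is `ΩT`, with the product mass function `mass`.
-/

open scoped Classical
open Finset

namespace NestedTeam

noncomputable section

/-- Memory of agent 2 at time `t`: observations `Y²₀,…,Y²ₜ` and actions `U²₀,…,U²ₜ₋₁`. -/
abbrev M2 (Y2 U2 : ℕ → Type) (t : ℕ) : Type :=
  ((s : Fin (t + 1)) → Y2 s) × ((s : Fin t) → U2 s)

/-- The private information `L_t^{[1,2]} = M¹_t \ M²_t` of agent 1. -/
abbrev Lp (Y1 U1 : ℕ → Type) (t : ℕ) : Type :=
  ((s : Fin (t + 1)) → Y1 s) × ((s : Fin t) → U1 s)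

/-- Memory of agent 1 at time `t` (nested information: it contains `M²_t`). -/
abbrev M1 (Y1 Y2 U1 U2 : ℕ → Type) (t : ℕ) : Type :=
  Lp Y1 U1 t × M2 Y2 U2 t

/-- The system: dynamics, observation maps and per-stage cost. -/
structure Sys (X U1 U2 W V1 V2 Y1 Y2 : ℕ → Type) where
  f : ∀ t, X t → U1 t → U2 t → W t → X (t + 1)
  h1 : ∀ t, X t → V1 t → Y1 t
  h2 : ∀ t, X t → V2 t → Y2 t
  c : ∀ t, X t → U1 t → U2 t → ℝ

/-- A control strategy profile: `U¹_t = g1 t M¹_t`, `U²_t = g2 t M²_t`. -/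
structure Strat (U1 U2 Y1 Y2 : ℕ → Type) where
  g1 : ∀ t, M1 Y1 Y2 U1 U2 t → U1 t
  g2 : ∀ t, M2 Y2 U2 t → U2 t

/-- A realization of the primitive random variables. -/
structure Prim (X W V1 V2 : ℕ → Type) where
  x0 : X 0
  w : ∀ t, W t
  v1 : ∀ t, V1 t
  v2 : ∀ t, V2 t

variable {X U1 U2 W V1 V2 Y1 Y2 : ℕ → Type}

/-- The closed-loop trajectory: states `X_{0:t}` and actions `U^{1:2}_{0:t-1}`. -/
def hist (S : Sys X U1 U2 W V1 V2 Y1 Y2) (g : Strat U1 U2 Y1 Y2) (ρ : Prim X W V1 V2) :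
    (t : ℕ) → ((s : Fin (t + 1)) → X s) × ((s : Fin t) → U1 s × U2 s)
  | 0 => (Fin.cons (α := fun s : Fin 1 => X s) ρ.x0 (fun i => i.elim0), fun i => i.elim0)
  | t + 1 =>
    let p := hist S g ρ t
    let y1 : (s : Fin (t + 1)) → Y1 s := fun s => S.h1 s (p.1 s) (ρ.v1 s)
    let y2 : (s : Fin (t + 1)) → Y2 s := fun s => S.h2 s (p.1 s) (ρ.v2 s)
    let m1 : M1 Y1 Y2 U1 U2 t := ((y1, fun s => (p.2 s).1), (y2, fun s => (p.2 s).2))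
    let a1 := g.g1 t m1
    let a2 := g.g2 t m1.2
    (Fin.snoc (α := fun s : Fin (t + 2) => X s) p.1 (S.f t (p.1 (Fin.last t)) a1 a2 (ρ.w t)),
     Fin.snoc (α := fun s : Fin (t + 1) => U1 s × U2 s) p.2 (a1, a2))

/-- State `X_t` along the closed loop. -/
def xTraj (S : Sys X U1 U2 W V1 V2 Y1 Y2) (g : Strat U1 U2 Y1 Y2) (ρ : Prim X W V1 V2)
    (t : ℕ) : X t := (hist S g ρ t).1 (Fin.last t)

/-- `L_t^{[1,2]} = (Y¹_{0:t}, U¹_{0:t-1})` along the closed loop. -/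
def lpTraj (S : Sys X U1 U2 W V1 V2 Y1 Y2) (g : Strat U1 U2 Y1 Y2) (ρ : Prim X W V1 V2)
    (t : ℕ) : Lp Y1 U1 t :=
  (fun s => S.h1 s ((hist S g ρ t).1 s) (ρ.v1 s), fun s => ((hist S g ρ t).2 s).1)

/-- `M²_t = (Y²_{0:t}, U²_{0:t-1})` along the closed loop. -/
def m2Traj (S : Sys X U1 U2 W V1 V2 Y1 Y2) (g : Strat U1 U2 Y1 Y2) (ρ : Prim X W V1 V2)
    (t : ℕ) : M2 Y2 U2 t :=
  (fun s => S.h2 s ((hist S g ρ t).1 s) (ρ.v2 s), fun s => ((hist S g ρ t).2 s).2)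

/-- `M¹_t` along the closed loop. -/
def m1Traj (S : Sys X U1 U2 W V1 V2 Y1 Y2) (g : Strat U1 U2 Y1 Y2) (ρ : Prim X W V1 V2)
    (t : ℕ) : M1 Y1 Y2 U1 U2 t := (lpTraj S g ρ t, m2Traj S g ρ t)

/-- Action `U¹_t` along the closed loop. -/
def u1Traj (S : Sys X U1 U2 W V1 V2 Y1 Y2) (g : Strat U1 U2 Y1 Y2) (ρ : Prim X W V1 V2)
    (t : ℕ) : U1 t := g.g1 t (m1Traj S g ρ t)

/-- Action `U²_t` along the closed loop. -/
def u2Traj (S : Sys X U1 U2 W V1 V2 Y1 Y2) (g : Strat U1 U2 Y1 Y2) (ρ : Prim X W V1 V2)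
    (t : ℕ) : U2 t := g.g2 t (m2Traj S g ρ t)

/-- Observation `Y¹_t` along the closed loop. -/
def y1Traj (S : Sys X U1 U2 W V1 V2 Y1 Y2) (g : Strat U1 U2 Y1 Y2) (ρ : Prim X W V1 V2)
    (t : ℕ) : Y1 t := S.h1 t (xTraj S g ρ t) (ρ.v1 t)

/-- Observation `Y²_t` along the closed loop. -/
def y2Traj (S : Sys X U1 U2 W V1 V2 Y1 Y2) (g : Strat U1 U2 Y1 Y2) (ρ : Prim X W V1 V2)
    (t : ℕ) : Y2 t := S.h2 t (xTraj S g ρ t) (ρ.v2 t)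

/-- New information `Z¹_{t+1} = (Y¹_{t+1}, U¹_t, Y²_{t+1}, U²_t)` of agent 1. -/
def z1Traj (S : Sys X U1 U2 W V1 V2 Y1 Y2) (g : Strat U1 U2 Y1 Y2) (ρ : Prim X W V1 V2)
    (t : ℕ) : Y1 (t + 1) × U1 t × Y2 (t + 1) × U2 t :=
  (y1Traj S g ρ (t + 1), u1Traj S g ρ t, y2Traj S g ρ (t + 1), u2Traj S g ρ t)

/-- New information `Z²_{t+1} = (Y²_{t+1}, U²_t)` of agent 2. -/
def z2Traj (S : Sys X U1 U2 W V1 V2 Y1 Y2) (g : Strat U1 U2 Y1 Y2) (ρ : Prim X W V1 V2)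
    (t : ℕ) : Y2 (t + 1) × U2 t := (y2Traj S g ρ (t + 1), u2Traj S g ρ t)

/-- Sample space of primitive random variables for horizon `T`. -/
abbrev ΩT (X W V1 V2 : ℕ → Type) (T : ℕ) : Type :=
  X 0 × ((t : Fin (T + 1)) → W t) × ((t : Fin (T + 1)) → V1 t) × ((t : Fin (T + 1)) → V2 t)

/-- Extend a finite-horizon family to all times (by junk beyond the horizon). -/
def ext {α : ℕ → Type} [∀ t, Inhabited (α t)] (T : ℕ) (a : (t : Fin (T + 1)) → α t)
    (t : ℕ) : α t := if h : t < T + 1 then a ⟨t, h⟩ else default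

/-- The primitive realization corresponding to a sample point. -/
def toPrim [∀ t, Inhabited (W t)] [∀ t, Inhabited (V1 t)] [∀ t, Inhabited (V2 t)]
    (T : ℕ) (ω : ΩT X W V1 V2 T) : Prim X W V1 V2 :=
  ⟨ω.1, ext T ω.2.1, ext T ω.2.2.1, ext T ω.2.2.2⟩

/-- The (known) probability mass functions of the mutually independent primitive
random variables. -/
structure PrimPMF (X W V1 V2 : ℕ → Type) [Fintype (X 0)] [∀ t, Fintype (W t)]
    [∀ t, Fintype (V1 t)] [∀ t, Fintype (V2 t)] where
  pX0 : X 0 → ℝ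
  pW : ∀ t, W t → ℝ
  pV1 : ∀ t, V1 t → ℝ
  pV2 : ∀ t, V2 t → ℝ
  pX0_nonneg : ∀ x, 0 ≤ pX0 x
  pX0_sum : ∑ x, pX0 x = 1
  pW_nonneg : ∀ t w, 0 ≤ pW t w
  pW_sum : ∀ t, ∑ w, pW t w = 1
  pV1_nonneg : ∀ t v, 0 ≤ pV1 t v
  pV1_sum : ∀ t, ∑ v, pV1 t v = 1
  pV2_nonneg : ∀ t v, 0 ≤ pV2 t v
  pV2_sum : ∀ t, ∑ v, pV2 t v = 1

variable [Fintype (X 0)] [∀ t, Fintype (W t)] [∀ t, Fintype (V1 t)] [∀ t, Fintype (V2 t)]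
variable [∀ t, Inhabited (W t)] [∀ t, Inhabited (V1 t)] [∀ t, Inhabited (V2 t)]

/-- Product mass of a sample point (independent primitives). -/
def mass (P : PrimPMF X W V1 V2) (T : ℕ) (ω : ΩT X W V1 V2 T) : ℝ :=
  P.pX0 ω.1 * (∏ t : Fin (T + 1), P.pW t (ω.2.1 t)) *
    (∏ t : Fin (T + 1), P.pV1 t (ω.2.2.1 t)) * (∏ t : Fin (T + 1), P.pV2 t (ω.2.2.2 t))

/-- Elementary conditional probability `P(A | B)` on a finite sample space. -/
def condProb {Ω : Type*} [Fintype Ω] (P : Ω → ℝ) (A B : Ω → Prop) : ℝ :=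
  (∑ ω, if A ω ∧ B ω then P ω else 0) / (∑ ω, if B ω then P ω else 0)

/-- Elementary conditional expectation `E[F | B]` on a finite sample space. -/
def condExp {Ω : Type*} [Fintype Ω] (P : Ω → ℝ) (F : Ω → ℝ) (B : Ω → Prop) : ℝ :=
  (∑ ω, if B ω then P ω * F ω else 0) / (∑ ω, if B ω then P ω else 0)

/-- Agent 1's information state `Π¹_t = P(X_t = · | M¹_t)` at the realization `ω`. -/
def infoState1 (S : Sys X U1 U2 W V1 V2 Y1 Y2) (g : Strat U1 U2 Y1 Y2)
    (P : PrimPMF X W V1 V2) (T : ℕ) (ω : ΩT X W V1 V2 T) (t : ℕ) : X t → ℝ :=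
  fun x => condProb (mass P T)
    (fun ω' => xTraj S g (toPrim T ω') t = x)
    (fun ω' => m1Traj S g (toPrim T ω') t = m1Traj S g (toPrim T ω) t)

/-- Agent 2's information state `Π²_t = P((X_t, L_t^{[1,2]}) = · | M²_t)` at `ω`. -/
def infoState2 (S : Sys X U1 U2 W V1 V2 Y1 Y2) (g : Strat U1 U2 Y1 Y2)
    (P : PrimPMF X W V1 V2) (T : ℕ) (ω : ΩT X W V1 V2 T) (t : ℕ) :
    X t × Lp Y1 U1 t → ℝ :=
  fun sl => condProb (mass P T)
    (fun ω' => (xTraj S g (toPrim T ω') t, lpTraj S g (toPrim T ω') t) = sl)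
    (fun ω' => m2Traj S g (toPrim T ω') t = m2Traj S g (toPrim T ω) t)

/-- Per-stage cost along the closed loop. -/
def stageCost (S : Sys X U1 U2 W V1 V2 Y1 Y2) (g : Strat U1 U2 Y1 Y2) (ρ : Prim X W V1 V2)
    (t : ℕ) : ℝ := S.c t (xTraj S g ρ t) (u1Traj S g ρ t) (u2Traj S g ρ t)

/-- Expected cost-to-go `𝒥_{t₀}(g) = E[Σ_{t=t₀}^T c_t(X_t,U¹_t,U²_t)]`. -/
def costToGo (S : Sys X U1 U2 W V1 V2 Y1 Y2) (g : Strat U1 U2 Y1 Y2)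
    (P : PrimPMF X W V1 V2) (T t0 : ℕ) : ℝ :=
  ∑ ω : ΩT X W V1 V2 T, mass P T ω * ∑ t ∈ Finset.Icc t0 T, stageCost S g (toPrim T ω) t

/-- Expected total cost `𝒥(g) = E[Σ_{t=0}^T c_t(X_t,U¹_t,U²_t)]`. -/
def totalCost (S : Sys X U1 U2 W V1 V2 Y1 Y2) (g : Strat U1 U2 Y1 Y2)
    (P : PrimPMF X W V1 V2) (T : ℕ) : ℝ := costToGo S g P T 0

/-- `(g, ψ²)` is a compatible control/prescription pair: agent 1's action is
generated by the prescription `Γ_t^{[2,1]} = ψ_t(M²_t)` applied to `Π¹_t`. -/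
def Compat (S : Sys X U1 U2 W V1 V2 Y1 Y2) (g : Strat U1 U2 Y1 Y2)
    (ψ : ∀ t, M2 Y2 U2 t → (X t → ℝ) → U1 t) (P : PrimPMF X W V1 V2) (T : ℕ) : Prop :=
  ∀ t, t ≤ T → ∀ ω : ΩT X W V1 V2 T, 0 < mass P T ω →
    u1Traj S g (toPrim T ω) t =
      ψ t (m2Traj S g (toPrim T ω) t) (infoState1 S g P T ω t)

/-- The map `e_t` of Lemma 4: conditioning a joint distribution on
`𝒳_t × 𝓛_t^{[1,2]}` on its second component. -/
def eMap [∀ t, Fintype (X t)] (t : ℕ) (π2 : X t × Lp Y1 U1 t → ℝ) (l : Lp Y1 U1 t) :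
    X t → ℝ := fun x => π2 (x, l) / ∑ x', π2 (x', l)

/-- Lemma 4 of the paper. There is a strategy-independent map
`e_t : Δ(𝒳_t × 𝓛_t^{[1,2]}) × 𝓛_t^{[1,2]} → Δ(𝒳_t)` — concretely
`e t π² l x = π² (x, l) / Σ_{x'} π² (x', l)` whenever the marginal is positive —
such that for every compatible control/prescription pair `(g, ψ)` and every
realization of positive probability, `Π¹_t = e t (Π²_t) (L_t^{[1,2]})`. -/
theorem infoState1_eq_eMap_infoState2
    [∀ t, Fintype (X t)] [∀ t, Fintype (U1 t)] [∀ t, Fintype (U2 t)]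
    [∀ t, Fintype (Y1 t)] [∀ t, Fintype (Y2 t)]
    (T : ℕ) (S : Sys X U1 U2 W V1 V2 Y1 Y2) (P : PrimPMF X W V1 V2) :
    ∃ e : ∀ t, (X t × Lp Y1 U1 t → ℝ) → Lp Y1 U1 t → X t → ℝ,
      (∀ t (π2 : X t × Lp Y1 U1 t → ℝ) (l : Lp Y1 U1 t),
        (0 < ∑ x', π2 (x', l)) →
          ∀ x, e t π2 l x = π2 (x, l) / ∑ x', π2 (x', l)) ∧
      ∀ (g : Strat U1 U2 Y1 Y2) (ψ : ∀ t, M2 Y2 U2 t → (X t → ℝ) → U1 t),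
        Compat S g ψ P T →
        ∀ t, t ≤ T → ∀ ω : ΩT X W V1 V2 T, 0 < mass P T ω →
          infoState1 S g P T ω t =
            e t (infoState2 S g P T ω t) (lpTraj S g (toPrim T ω) t) := by
  refine ⟨fun t π2 l => eMap t π2 l, fun t π2 l _ x => rfl, ?_⟩
  intro g ψ _ t _ ω hω
  have hnn : ∀ ω' : ΩT X W V1 V2 T, 0 ≤ mass P T ω' := fun ω' =>
    mul_nonneg (mul_nonneg (mul_nonneg (P.pX0_nonneg _)
      (Finset.prod_nonneg fun _ _ => P.pW_nonneg _ _))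
      (Finset.prod_nonneg fun _ _ => P.pV1_nonneg _ _))
      (Finset.prod_nonneg fun _ _ => P.pV2_nonneg _ _)
  have hB : 0 < ∑ ω' : ΩT X W V1 V2 T,
      if m2Traj S g (toPrim T ω') t = m2Traj S g (toPrim T ω) t then mass P T ω' else 0 := by
    refine Finset.sum_pos' (fun ω' _ => ?_) ⟨ω, Finset.mem_univ _, ?_⟩
    · split_ifs
      · exact hnn ω'
      · exact le_rfl
    · rw [if_pos rfl]
      exact hω
  have hN : ∀ x : X t, infoState2 S g P T ω t (x, lpTraj S g (toPrim T ω) t) =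
      (∑ ω' : ΩT X W V1 V2 T, if xTraj S g (toPrim T ω') t = x ∧
        m1Traj S g (toPrim T ω') t = m1Traj S g (toPrim T ω) t then mass P T ω' else 0) /
      (∑ ω' : ΩT X W V1 V2 T,
        if m2Traj S g (toPrim T ω') t = m2Traj S g (toPrim T ω) t then mass P T ω' else 0) := by
    intro x
    unfold infoState2 condProb
    refine congrArg₂ (· / ·) (Finset.sum_congr rfl fun ω' _ => ?_)
      (Finset.sum_congr rfl fun ω' _ => ?_)
    · refine ite_congr (propext ?_) (fun _ => rfl) (fun _ => rfl)
      simp only [m1Traj, Prod.mk.injEq]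
      tauto
    · exact ite_congr rfl (fun _ => rfl) (fun _ => rfl)
  have hD : (∑ x : X t, ∑ ω' : ΩT X W V1 V2 T, if xTraj S g (toPrim T ω') t = x ∧
        m1Traj S g (toPrim T ω') t = m1Traj S g (toPrim T ω) t then mass P T ω' else 0) =
      ∑ ω' : ΩT X W V1 V2 T,
        if m1Traj S g (toPrim T ω') t = m1Traj S g (toPrim T ω) t then mass P T ω' else 0 := by
    rw [Finset.sum_comm]
    refine Finset.sum_congr rfl fun ω' _ => ?_
    simp only [ite_and]
    rw [Finset.sum_ite_eq]
    simp
  funext x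
  simp only [eMap, hN]
  rw [← Finset.sum_div, hD, div_div_div_cancel_right₀ hB.ne']
  unfold infoState1 condProb
  refine congrArg₂ (· / ·) (Finset.sum_congr rfl fun ω' _ => ?_)
    (Finset.sum_congr rfl fun ω' _ => ?_)
  · exact ite_congr rfl (fun _ => rfl) (fun _ => rfl)
  · exact ite_congr rfl (fun _ => rfl) (fun _ => rfl)


end

end NestedTeam
end

section
/- For each time t = 0,…,T−1 there exists a function f̃_t^2, independent of the strategy pair (g, ψ^2), such that along every realization of positive probability, Π_{t+1}^2 = f̃_t^2(Π_t^2, Γ_t^{[2,1]}, U_t^2, Z_{t+1}^2). Consequently, for any set P² of distributions in Δ(𝒳_{t+1} × 𝓛_{t+1}^{[1,2]}), P(Π_{t+1}^2 ∈ P² | M_t^2, Γ_{0:t}^{[2,1]}) = P(Π_{t+1}^2 ∈ P² | Π_t^2, U_t^2, Γ_t^{[2,1]}). -/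
/-!
Common framework: a two-agent sequential dynamic team with nested information
structure (Dave & Malikopoulos, "Structural results for decentralized
stochastic control with a nested information structure").

* `X t` : state space at time `t`; `U1 t`, `U2 t` : action spaces of agents 1 and 2;
* `W t` : disturbance; `V1 t`, `V2 t` : measurement noises; `Y1 t`, `Y2 t` : observations.
* Dynamics `X_{t+1} = f t X_t U¹_t U²_t W_t`, observations `Y^k_t = h^k t X_t V^k_t`.
* Memories `M²_t = (Y²_{0:t}, U²_{0:t-1})`, `L_t^{[1,2]} = (Y¹_{0:t}, U¹_{0:t-1})`,
  `M¹_t = (L_t^{[1,2]}, M²_t)` (nested information).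
* The primitive random variables are independent with given PMFs; the sample
  space for horizon `T` is `ΩT`, with the product mass function `mass`.
-/

open scoped Classical
open Finset

namespace NestedTeam

noncomputable section

variable {X U1 U2 W V1 V2 Y1 Y2 : ℕ → Type}

variable [Fintype (X 0)] [∀ t, Fintype (W t)] [∀ t, Fintype (V1 t)] [∀ t, Fintype (V2 t)]
variable [∀ t, Inhabited (W t)] [∀ t, Inhabited (V1 t)] [∀ t, Inhabited (V2 t)]

set_option linter.unusedSectionVars false

/-- Append a new observation and action to the private information. -/
def lpext (t : ℕ) (l : Lp Y1 U1 t) (y : Y1 (t + 1)) (a : U1 t) : Lp Y1 U1 (t + 1) :=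
  (Fin.snoc (α := fun s : Fin (t + 2) => Y1 s) l.1 y,
    Fin.snoc (α := fun s : Fin (t + 1) => U1 s) l.2 a)

lemma hist_congr (S : Sys X U1 U2 W V1 V2 Y1 Y2) (g : Strat U1 U2 Y1 Y2)
    (ρ ρ' : Prim X W V1 V2) (h0 : ρ.x0 = ρ'.x0) (t : ℕ)
    (hw : ∀ s, s < t → ρ.w s = ρ'.w s) (h1 : ∀ s, s < t → ρ.v1 s = ρ'.v1 s)
    (h2 : ∀ s, s < t → ρ.v2 s = ρ'.v2 s) : hist S g ρ t = hist S g ρ' t := by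
  induction t with
  | zero => simp only [hist, h0]
  | succ t ih =>
    have e := ih (fun s hs => hw s (by omega)) (fun s hs => h1 s (by omega))
      (fun s hs => h2 s (by omega))
    have e1 : (fun s : Fin (t + 1) => S.h1 s ((hist S g ρ' t).1 s) (ρ.v1 s)) =
        fun s : Fin (t + 1) => S.h1 s ((hist S g ρ' t).1 s) (ρ'.v1 s) := by
      funext s; rw [h1 s s.2]
    have e2 : (fun s : Fin (t + 1) => S.h2 s ((hist S g ρ' t).1 s) (ρ.v2 s)) =
        fun s : Fin (t + 1) => S.h2 s ((hist S g ρ' t).1 s) (ρ'.v2 s) := by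
      funext s; rw [h2 s s.2]
    simp only [hist, e, e1, e2, hw t (by omega)]

lemma xTraj_succ (S : Sys X U1 U2 W V1 V2 Y1 Y2) (g : Strat U1 U2 Y1 Y2)
    (ρ : Prim X W V1 V2) (t : ℕ) :
    xTraj S g ρ (t + 1) =
      S.f t (xTraj S g ρ t) (u1Traj S g ρ t) (u2Traj S g ρ t) (ρ.w t) := by
  unfold xTraj
  conv_lhs => simp only [hist]
  rw [Fin.snoc_last]
  rfl

lemma lpTraj_succ (S : Sys X U1 U2 W V1 V2 Y1 Y2) (g : Strat U1 U2 Y1 Y2)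
    (ρ : Prim X W V1 V2) (t : ℕ) :
    lpTraj S g ρ (t + 1) = lpext t (lpTraj S g ρ t)
      (S.h1 (t + 1) (xTraj S g ρ (t + 1)) (ρ.v1 (t + 1))) (u1Traj S g ρ t) := by
  refine Prod.ext ?_ ?_
  · funext s
    refine Fin.lastCases ?_ (fun s => ?_) s
    · simp only [lpext, Fin.snoc_last]; rfl
    · simp only [lpext, Fin.snoc_castSucc, lpTraj, hist]; rfl
  · funext s
    refine Fin.lastCases ?_ (fun s => ?_) s
    · simp only [lpext, Fin.snoc_last, lpTraj, hist]; rfl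
    · simp only [lpext, Fin.snoc_castSucc, lpTraj, hist]

lemma m2Traj_succ (S : Sys X U1 U2 W V1 V2 Y1 Y2) (g : Strat U1 U2 Y1 Y2)
    (ρ : Prim X W V1 V2) (t : ℕ) :
    m2Traj S g ρ (t + 1) = lpext t (m2Traj S g ρ t) (y2Traj S g ρ (t + 1)) (u2Traj S g ρ t) := by
  refine Prod.ext ?_ ?_
  · funext s
    refine Fin.lastCases ?_ (fun s => ?_) s
    · simp only [lpext, Fin.snoc_last]; rfl
    · simp only [lpext, Fin.snoc_castSucc, m2Traj, hist]; rfl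
  · funext s
    refine Fin.lastCases ?_ (fun s => ?_) s
    · simp only [lpext, Fin.snoc_last, m2Traj, hist]; rfl
    · simp only [lpext, Fin.snoc_castSucc, m2Traj, hist]

lemma lpext_inj (t : ℕ) (l l' : Lp Y1 U1 t) (y y' : Y1 (t + 1)) (a a' : U1 t)
    (h : lpext t l y a = lpext t l' y' a') : l = l' ∧ y = y' ∧ a = a' := by
  unfold lpext at h
  have h1 := congrArg Prod.fst h
  have h2 := congrArg Prod.snd h
  simp only at h1 h2
  refine ⟨Prod.ext ?_ ?_, ?_, ?_⟩
  · funext s; simpa only [Fin.snoc_castSucc] using congrFun h1 s.castSucc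
  · funext s; simpa only [Fin.snoc_castSucc] using congrFun h2 s.castSucc
  · simpa only [Fin.snoc_last] using congrFun h1 (Fin.last (t + 1))
  · simpa only [Fin.snoc_last] using congrFun h2 (Fin.last t)

/-- Expectation. -/
def E (P : PrimPMF X W V1 V2) (T : ℕ) (F : ΩT X W V1 V2 T → ℝ) : ℝ :=
  ∑ ω, mass P T ω * F ω

/-- Replace the disturbance at time t and the noises at time t+1. -/
def resamp (T t : ℕ) (ht : t < T) (ω : ΩT X W V1 V2 T)
    (b : W t × V1 (t + 1) × V2 (t + 1)) : ΩT X W V1 V2 T :=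
  (ω.1, Function.update ω.2.1 ⟨t, by omega⟩ b.1,
    Function.update ω.2.2.1 ⟨t + 1, by omega⟩ b.2.1,
    Function.update ω.2.2.2 ⟨t + 1, by omega⟩ b.2.2)

/-- Joint law of the fresh noise. -/
def q (P : PrimPMF X W V1 V2) (t : ℕ) (b : W t × V1 (t + 1) × V2 (t + 1)) : ℝ :=
  P.pW t b.1 * P.pV1 (t + 1) b.2.1 * P.pV2 (t + 1) b.2.2

/-- The coordinates replaced by resamp. -/
def coords (T t : ℕ) (ht : t < T) (ω : ΩT X W V1 V2 T) : W t × V1 (t + 1) × V2 (t + 1) :=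
  (ω.2.1 ⟨t, by omega⟩, ω.2.2.1 ⟨t + 1, by omega⟩, ω.2.2.2 ⟨t + 1, by omega⟩)

lemma prod_upd {ι : Type*} [Fintype ι] [DecidableEq ι] {α : ι → Type*} (p : ∀ i, α i → ℝ)
    (a : ∀ i, α i) (j : ι) (b : α j) :
    (∏ i, p i (Function.update a j b i)) * p j (a j) = (∏ i, p i (a i)) * p j b := by
  rw [← Finset.mul_prod_erase univ (fun i => p i (Function.update a j b i)) (mem_univ j),
    ← Finset.mul_prod_erase univ (fun i => p i (a i)) (mem_univ j)]
  have : ∏ x ∈ univ.erase j, p x (Function.update a j b x) = ∏ x ∈ univ.erase j, p x (a x) :=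
    Finset.prod_congr rfl fun x hx => by
      rw [Function.update_of_ne (Finset.ne_of_mem_erase hx)]
  rw [this]
  simp only [Function.update_self]
  ring

lemma mass_resamp (P : PrimPMF X W V1 V2) (T t : ℕ) (ht : t < T) (ω : ΩT X W V1 V2 T)
    (b : W t × V1 (t + 1) × V2 (t + 1)) :
    mass P T (resamp T t ht ω b) * q P t (coords T t ht ω) = mass P T ω * q P t b := by
  have h1 := prod_upd (fun i : Fin (T + 1) => P.pW i) ω.2.1 ⟨t, by omega⟩ b.1
  have h2 := prod_upd (fun i : Fin (T + 1) => P.pV1 i) ω.2.2.1 ⟨t + 1, by omega⟩ b.2.1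
  have h3 := prod_upd (fun i : Fin (T + 1) => P.pV2 i) ω.2.2.2 ⟨t + 1, by omega⟩ b.2.2
  simp only at h1 h2 h3
  simp only [mass, q, coords, resamp]
  have h := congrArg₂ (· * ·) (congrArg₂ (· * ·) h1 h2) h3
  beta_reduce at h
  have h' := congrArg (fun r => P.pX0 ω.1 * r) h
  calc _ = _ := by ring
    _ = _ := h'
    _ = _ := by ring

lemma q_sum (P : PrimPMF X W V1 V2) (t : ℕ) : ∑ b, q P t b = 1 := by
  simp only [q, Fintype.sum_prod_type, ← Finset.mul_sum, P.pV2_sum, P.pV1_sum, P.pW_sum, mul_one]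

lemma resamp_invol (T t : ℕ) (ht : t < T) : Function.Involutive
    (fun p : ΩT X W V1 V2 T × (W t × V1 (t + 1) × V2 (t + 1)) =>
      (resamp T t ht p.1 p.2, coords T t ht p.1)) := by
  rintro ⟨⟨x, w, v1, v2⟩, b1, b2, b3⟩
  simp [resamp, coords]

lemma E_resamp (P : PrimPMF X W V1 V2) (T t : ℕ) (ht : t < T) (F : ΩT X W V1 V2 T → ℝ) :
    E P T F = E P T (fun ω => ∑ b, q P t b * F (resamp T t ht ω b)) := by
  have h : ∑ p : ΩT X W V1 V2 T × (W t × V1 (t + 1) × V2 (t + 1)),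
      mass P T p.1 * q P t p.2 * F p.1 = ∑ p : ΩT X W V1 V2 T × (W t × V1 (t + 1) × V2 (t + 1)),
      mass P T p.1 * q P t p.2 * F (resamp T t ht p.1 p.2) := by
    rw [← Equiv.sum_comp (Function.Involutive.toPerm _ (resamp_invol T t ht))]
    refine Finset.sum_congr rfl fun p _ => ?_
    simp only [Function.Involutive.coe_toPerm, mass_resamp]
  rw [Fintype.sum_prod_type (α₁ := ΩT X W V1 V2 T), Fintype.sum_prod_type (α₁ := ΩT X W V1 V2 T)] at h
  unfold E
  simp only [Finset.mul_sum, ← mul_assoc]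
  rw [← h]
  refine Finset.sum_congr rfl fun ω _ => ?_
  simp only
  rw [← Finset.sum_mul, ← Finset.mul_sum, q_sum, mul_one]

lemma ext_upd_ne {α : ℕ → Type} [∀ t, Inhabited (α t)] (T : ℕ) (a : (t : Fin (T + 1)) → α t)
    (j : Fin (T + 1)) (b : α j) (s : ℕ) (hs : s ≠ j) :
    ext T (Function.update a j b) s = ext T a s := by
  unfold ext
  split_ifs with h
  · rw [Function.update_of_ne]
    intro e; apply hs; rw [← e]
  · rfl

lemma ext_upd_self {α : ℕ → Type} [∀ t, Inhabited (α t)] (T : ℕ) (a : (t : Fin (T + 1)) → α t)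
    (t : ℕ) (h : t < T + 1) (b : α t) :
    ext T (Function.update a ⟨t, h⟩ b) t = b := by
  unfold ext
  rw [dif_pos h]
  exact Function.update_self (β := fun i : Fin (T + 1) => α i) ⟨t, h⟩ b a

section res
variable (S : Sys X U1 U2 W V1 V2 Y1 Y2) (g : Strat U1 U2 Y1 Y2) (T t : ℕ) (ht : t < T)
  (ω : ΩT X W V1 V2 T) (b : W t × V1 (t + 1) × V2 (t + 1))

lemma hist_res : hist S g (toPrim T (resamp T t ht ω b)) t = hist S g (toPrim T ω) t := by
  apply hist_congr
  · rfl
  all_goals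
    intro s hs
    simp only [toPrim, resamp]
    apply ext_upd_ne
    simp only
    omega

lemma x_res : xTraj S g (toPrim T (resamp T t ht ω b)) t = xTraj S g (toPrim T ω) t := by
  simp only [xTraj, hist_res]

lemma lp_res : lpTraj S g (toPrim T (resamp T t ht ω b)) t = lpTraj S g (toPrim T ω) t := by
  simp only [lpTraj, hist_res]
  refine Prod.ext ?_ rfl
  funext s
  simp only
  congr 1
  simp only [toPrim, resamp]
  apply ext_upd_ne
  simp only
  omega

lemma m2_res : m2Traj S g (toPrim T (resamp T t ht ω b)) t = m2Traj S g (toPrim T ω) t := by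
  simp only [m2Traj, hist_res]
  refine Prod.ext ?_ rfl
  funext s
  simp only
  congr 1
  simp only [toPrim, resamp]
  apply ext_upd_ne
  simp only
  omega

lemma u1_res : u1Traj S g (toPrim T (resamp T t ht ω b)) t = u1Traj S g (toPrim T ω) t := by
  simp only [u1Traj, m1Traj, lp_res, m2_res]

lemma u2_res : u2Traj S g (toPrim T (resamp T t ht ω b)) t = u2Traj S g (toPrim T ω) t := by
  simp only [u2Traj, m2_res]

lemma x_res_succ : xTraj S g (toPrim T (resamp T t ht ω b)) (t + 1) =
    S.f t (xTraj S g (toPrim T ω) t) (u1Traj S g (toPrim T ω) t) (u2Traj S g (toPrim T ω) t)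
      b.1 := by
  rw [xTraj_succ, x_res, u1_res, u2_res]
  congr 1
  exact ext_upd_self T _ t _ b.1

lemma lp_res_succ : lpTraj S g (toPrim T (resamp T t ht ω b)) (t + 1) =
    lpext t (lpTraj S g (toPrim T ω) t) (S.h1 (t + 1)
    (S.f t (xTraj S g (toPrim T ω) t) (u1Traj S g (toPrim T ω) t) (u2Traj S g (toPrim T ω) t)
      b.1) b.2.1) (u1Traj S g (toPrim T ω) t) := by
  rw [lpTraj_succ, lp_res, u1_res, x_res_succ]
  congr 2
  exact ext_upd_self T _ (t + 1) _ b.2.1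

lemma y2_res_succ : y2Traj S g (toPrim T (resamp T t ht ω b)) (t + 1) =
    S.h2 (t + 1)
    (S.f t (xTraj S g (toPrim T ω) t) (u1Traj S g (toPrim T ω) t) (u2Traj S g (toPrim T ω) t)
      b.1) b.2.2 := by
  rw [y2Traj, x_res_succ]
  congr 1
  exact ext_upd_self T _ (t + 1) _ b.2.2
end res

lemma mass_nonneg (P : PrimPMF X W V1 V2) (T : ℕ) (ω : ΩT X W V1 V2 T) : 0 ≤ mass P T ω := by
  unfold mass
  have a := P.pX0_nonneg ω.1
  have b := Finset.prod_nonneg (s := univ) fun (t : Fin (T + 1)) _ => P.pW_nonneg t (ω.2.1 t)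
  have c := Finset.prod_nonneg (s := univ) fun (t : Fin (T + 1)) _ => P.pV1_nonneg t (ω.2.2.1 t)
  have d := Finset.prod_nonneg (s := univ) fun (t : Fin (T + 1)) _ => P.pV2_nonneg t (ω.2.2.2 t)
  positivity

/-- Indicator. -/
def ind (A : Prop) : ℝ := if A then 1 else 0

lemma ind_and (A B : Prop) : ind (A ∧ B) = ind A * ind B := by
  by_cases hA : A <;> by_cases hB : B <;> simp [ind, hA, hB]

lemma condProb_eq {T' : ℕ} (i : Fintype (ΩT X W V1 V2 T')) (P : PrimPMF X W V1 V2)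
    (A B : ΩT X W V1 V2 T' → Prop) :
    @condProb _ i (mass P T') A B =
      E P T' (fun ω => ind (A ω ∧ B ω)) / E P T' (fun ω => ind (B ω)) := by
  unfold condProb E ind
  simp only [mul_ite, mul_one, mul_zero]
  congr!

/-- E only sees sample points of positive mass. -/
lemma E_congr (P : PrimPMF X W V1 V2) (T : ℕ) (F G : ΩT X W V1 V2 T → ℝ)
    (h : ∀ ω, 0 < mass P T ω → F ω = G ω) : E P T F = E P T G := by
  unfold E
  refine Finset.sum_congr rfl fun ω _ => ?_
  rcases (mass_nonneg P T ω).eq_or_lt with h0 | h0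
  · rw [← h0]; simp
  · rw [h ω h0]

lemma E_ind_pos (P : PrimPMF X W V1 V2) (T : ℕ) (B : ΩT X W V1 V2 T → Prop)
    (ω : ΩT X W V1 V2 T) (h : 0 < mass P T ω) (hB : B ω) : 0 < E P T (fun ω => ind (B ω)) := by
  unfold E
  refine Finset.sum_pos' (fun ω' _ => mul_nonneg (mass_nonneg P T ω') ?_) ⟨ω, mem_univ _, ?_⟩
  · unfold ind; beta_reduce; split_ifs <;> norm_num
  · simpa [ind, hB] using h

lemma E_sum {ι : Type*} [Fintype ι] (P : PrimPMF X W V1 V2) (T : ℕ)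
    (F : ι → ΩT X W V1 V2 T → ℝ) :
    E P T (fun ω => ∑ i, F i ω) = ∑ i, E P T (F i) := by
  unfold E
  rw [Finset.sum_comm]
  simp only [Finset.mul_sum]

lemma E_mul (P : PrimPMF X W V1 V2) (T : ℕ) (F : ΩT X W V1 V2 T → ℝ) (c : ℝ) :
    E P T (fun ω => F ω * c) = E P T F * c := by
  unfold E
  rw [Finset.sum_mul]
  simp only [mul_assoc]

lemma sum_ind {ι : Type*} [Fintype ι] (i : ι) (K : ι → ℝ) : ∑ j, ind (i = j) * K j = K i := by
  simp [ind]

section key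
variable [∀ t, Fintype (X t)] [∀ t, Fintype (U1 t)] [∀ t, Fintype (U2 t)]
    [∀ t, Fintype (Y1 t)] [∀ t, Fintype (Y2 t)]

/-- One-step prediction operator. -/
def Kop (S : Sys X U1 U2 W V1 V2 Y1 Y2) (P : PrimPMF X W V1 V2) (t : ℕ)
    (π : X t × Lp Y1 U1 t → ℝ) (γ : (X t → ℝ) → U1 t) (u : U2 t)
    (F : X (t + 1) → Lp Y1 U1 (t + 1) → Y2 (t + 1) → ℝ) : ℝ :=
  ∑ xl : X t × Lp Y1 U1 t, π xl * ∑ b, q P t b *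
    F (S.f t xl.1 (γ (eMap t π xl.2)) u b.1)
      (lpext t xl.2 (S.h1 (t + 1) (S.f t xl.1 (γ (eMap t π xl.2)) u b.1) b.2.1)
        (γ (eMap t π xl.2)))
      (S.h2 (t + 1) (S.f t xl.1 (γ (eMap t π xl.2)) u b.1) b.2.2)

lemma eMap_info (S : Sys X U1 U2 W V1 V2 Y1 Y2) (g : Strat U1 U2 Y1 Y2)
    (P : PrimPMF X W V1 V2) (T t : ℕ) (ω : ΩT X W V1 V2 T) (hω : 0 < mass P T ω) :
    eMap t (infoState2 S g P T ω t) (lpTraj S g (toPrim T ω) t) = infoState1 S g P T ω t := by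
  funext x
  have hpos := E_ind_pos P T (fun ω' => m2Traj S g (toPrim T ω') t = m2Traj S g (toPrim T ω) t)
    ω hω rfl
  simp only [eMap, infoState2, infoState1, condProb_eq, ← Finset.sum_div]
  rw [div_div_div_cancel_right₀ hpos.ne', ← E_sum]
  congr 1
  · congr 1; funext ω'; congr 1
    simp only [m1Traj, Prod.mk.injEq, and_assoc]
  · congr 1; funext ω'
    have := sum_ind (xTraj S g (toPrim T ω') t)
      (fun _ => ind (m1Traj S g (toPrim T ω') t = m1Traj S g (toPrim T ω) t))
    rw [← this]
    refine Finset.sum_congr rfl fun x _ => ?_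
    rw [← ind_and]; congr 1
    simp only [m1Traj, Prod.mk.injEq, and_assoc]

lemma key (S : Sys X U1 U2 W V1 V2 Y1 Y2) (g : Strat U1 U2 Y1 Y2)
    (P : PrimPMF X W V1 V2) (T : ℕ) (ψ : ∀ t, M2 Y2 U2 t → (X t → ℝ) → U1 t)
    (hc : Compat S g ψ P T) (t : ℕ) (ht : t < T) (ω : ΩT X W V1 V2 T) (hω : 0 < mass P T ω)
    (F : X (t + 1) → Lp Y1 U1 (t + 1) → Y2 (t + 1) → ℝ) :
    E P T (fun ω' => ind (m2Traj S g (toPrim T ω') t = m2Traj S g (toPrim T ω) t) *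
      F (xTraj S g (toPrim T ω') (t + 1)) (lpTraj S g (toPrim T ω') (t + 1))
        (y2Traj S g (toPrim T ω') (t + 1))) =
    E P T (fun ω' => ind (m2Traj S g (toPrim T ω') t = m2Traj S g (toPrim T ω) t)) *
      Kop S P t (infoState2 S g P T ω t) (ψ t (m2Traj S g (toPrim T ω) t))
        (u2Traj S g (toPrim T ω) t) F := by
  have hpos := E_ind_pos P T (fun ω' => m2Traj S g (toPrim T ω') t = m2Traj S g (toPrim T ω) t)
    ω hω rfl
  set π := infoState2 S g P T ω t with hπ
  set γ := ψ t (m2Traj S g (toPrim T ω) t) with hγ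
  set u := u2Traj S g (toPrim T ω) t with hu
  set m := m2Traj S g (toPrim T ω) t with hm
  set K : X t × Lp Y1 U1 t → ℝ := fun xl => ∑ b, q P t b *
    F (S.f t xl.1 (γ (eMap t π xl.2)) u b.1)
      (lpext t xl.2 (S.h1 (t + 1) (S.f t xl.1 (γ (eMap t π xl.2)) u b.1) b.2.1)
        (γ (eMap t π xl.2)))
      (S.h2 (t + 1) (S.f t xl.1 (γ (eMap t π xl.2)) u b.1) b.2.2) with hK
  have hKop : Kop S P t π γ u F = ∑ xl, π xl * K xl := rfl
  rw [hKop, E_resamp P T t ht]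
  rw [E_congr P T _ (fun ω' => ∑ xl, ind ((xTraj S g (toPrim T ω') t,
      lpTraj S g (toPrim T ω') t) = xl ∧ m2Traj S g (toPrim T ω') t = m) * K xl), E_sum,
      Finset.mul_sum]
  · refine Finset.sum_congr rfl fun xl _ => ?_
    rw [E_mul, ← mul_assoc]
    congr 1
    rw [hπ, infoState2, condProb_eq, mul_div_cancel₀ _ hpos.ne']
  · intro ω' hω'
    simp only [m2_res, x_res_succ, lp_res_succ, y2_res_succ, ind_and, mul_assoc]
    rw [sum_ind]
    by_cases h : m2Traj S g (toPrim T ω') t = m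
    · have e1 : u2Traj S g (toPrim T ω') t = u := by
        rw [hu]; unfold u2Traj; rw [h]
      have e3 : infoState2 S g P T ω' t = π := by
        rw [hπ]; unfold infoState2; rw [h]
      have e2 : u1Traj S g (toPrim T ω') t = γ (eMap t π (lpTraj S g (toPrim T ω') t)) := by
        rw [hc t ht.le ω' hω', h, ← eMap_info S g P T t ω' hω', e3]
      simp [h, ind, hK, e1, e2]
    · simp [h, ind]

/-- The filter. -/
def filt (S : Sys X U1 U2 W V1 V2 Y1 Y2) (P : PrimPMF X W V1 V2) (t : ℕ)
    (π : X t × Lp Y1 U1 t → ℝ) (γ : (X t → ℝ) → U1 t) (u : U2 t)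
    (z : Y2 (t + 1) × U2 t) (xl : X (t + 1) × Lp Y1 U1 (t + 1)) : ℝ :=
  Kop S P t π γ u (fun x l y => ind ((x, l) = xl ∧ y = z.1)) /
    Kop S P t π γ u (fun _ _ y => ind (y = z.1))

lemma filt_eq (S : Sys X U1 U2 W V1 V2 Y1 Y2) (g : Strat U1 U2 Y1 Y2)
    (P : PrimPMF X W V1 V2) (T : ℕ) (ψ : ∀ t, M2 Y2 U2 t → (X t → ℝ) → U1 t)
    (hc : Compat S g ψ P T) (t : ℕ) (ht : t < T) (ω : ΩT X W V1 V2 T) (hω : 0 < mass P T ω) :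
    infoState2 S g P T ω (t + 1) =
      filt S P t (infoState2 S g P T ω t) (ψ t (m2Traj S g (toPrim T ω) t))
        (u2Traj S g (toPrim T ω) t) (z2Traj S g (toPrim T ω) t) := by
  have hpos := E_ind_pos P T (fun ω' => m2Traj S g (toPrim T ω') t = m2Traj S g (toPrim T ω) t)
    ω hω rfl
  have hiff : ∀ ω', m2Traj S g (toPrim T ω') (t + 1) = m2Traj S g (toPrim T ω) (t + 1) ↔
      m2Traj S g (toPrim T ω') t = m2Traj S g (toPrim T ω) t ∧
      y2Traj S g (toPrim T ω') (t + 1) = y2Traj S g (toPrim T ω) (t + 1) := by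
    intro ω'
    rw [m2Traj_succ, m2Traj_succ]
    constructor
    · intro h
      obtain ⟨a, b, _⟩ := lpext_inj _ _ _ _ _ _ _ h
      exact ⟨a, b⟩
    · rintro ⟨a, b⟩
      unfold u2Traj
      rw [a, b]
  funext xl
  unfold filt
  rw [← mul_div_mul_left _ _ hpos.ne', ← key S g P T ψ hc t ht ω hω,
    ← key S g P T ψ hc t ht ω hω, infoState2, condProb_eq]
  simp only [hiff, ind_and, z2Traj]
  congr 2
  funext ω'
  ring

lemma cond_eq (S : Sys X U1 U2 W V1 V2 Y1 Y2) (g : Strat U1 U2 Y1 Y2)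
    (P : PrimPMF X W V1 V2) (T : ℕ) (ψ : ∀ t, M2 Y2 U2 t → (X t → ℝ) → U1 t)
    (hc : Compat S g ψ P T) (t : ℕ) (ht : t < T) (ω : ΩT X W V1 V2 T) (hω : 0 < mass P T ω)
    (P2 : Set (X (t + 1) × Lp Y1 U1 (t + 1) → ℝ)) :
    E P T (fun ω' => ind (infoState2 S g P T ω' (t + 1) ∈ P2 ∧
      m2Traj S g (toPrim T ω') t = m2Traj S g (toPrim T ω) t)) =
    E P T (fun ω' => ind (m2Traj S g (toPrim T ω') t = m2Traj S g (toPrim T ω) t)) *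
      Kop S P t (infoState2 S g P T ω t) (ψ t (m2Traj S g (toPrim T ω) t))
        (u2Traj S g (toPrim T ω) t) (fun _ _ y => ind (filt S P t (infoState2 S g P T ω t)
          (ψ t (m2Traj S g (toPrim T ω) t)) (u2Traj S g (toPrim T ω) t)
          (y, u2Traj S g (toPrim T ω) t) ∈ P2)) := by
  rw [← key S g P T ψ hc t ht ω hω]
  refine E_congr _ _ _ _ fun ω' hω' => ?_
  rw [← ind_and, and_comm]
  congr 1
  refine propext (and_congr_right fun h => ?_)
  have e1 : u2Traj S g (toPrim T ω') t = u2Traj S g (toPrim T ω) t := by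
    unfold u2Traj; rw [h]
  have e3 : infoState2 S g P T ω' t = infoState2 S g P T ω t := by
    unfold infoState2; rw [h]
  rw [filt_eq S g P T ψ hc t ht ω' hω', e3, h, e1, z2Traj, e1]

lemma class_eq (S : Sys X U1 U2 W V1 V2 Y1 Y2) (g : Strat U1 U2 Y1 Y2)
    (P : PrimPMF X W V1 V2) (T : ℕ) (t : ℕ) (A C : ΩT X W V1 V2 T → Prop) (Φ : ℝ)
    (hC : ∀ ω ω', m2Traj S g (toPrim T ω') t = m2Traj S g (toPrim T ω) t → (C ω ↔ C ω'))
    (h : ∀ ω, 0 < mass P T ω → C ω →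
      E P T (fun ω' => ind (A ω' ∧ m2Traj S g (toPrim T ω') t = m2Traj S g (toPrim T ω) t)) =
      E P T (fun ω' => ind (m2Traj S g (toPrim T ω') t = m2Traj S g (toPrim T ω) t)) * Φ) :
    E P T (fun ω' => ind (A ω' ∧ C ω')) = E P T (fun ω' => ind (C ω')) * Φ := by
  have e1 : ∀ B : ΩT X W V1 V2 T → Prop, (fun ω' => ind (B ω')) = fun ω' => ∑ m,
      ind (m2Traj S g (toPrim T ω') t = m) * ind (B ω') := by
    intro B
    funext ω'
    exact (sum_ind (m2Traj S g (toPrim T ω') t) (fun _ => ind (B ω'))).symm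
  rw [e1 (fun ω' => A ω' ∧ C ω'), e1 C, E_sum, E_sum, Finset.sum_mul]
  refine Finset.sum_congr rfl fun m _ => ?_
  by_cases hm : ∃ ω, 0 < mass P T ω ∧ C ω ∧ m2Traj S g (toPrim T ω) t = m
  · obtain ⟨ω, hω, hCω, rfl⟩ := hm
    have := h ω hω hCω
    simp only [← ind_and]
    have k1 : ∀ ω', (m2Traj S g (toPrim T ω') t = m2Traj S g (toPrim T ω) t ∧ A ω' ∧ C ω') =
        (A ω' ∧ m2Traj S g (toPrim T ω') t = m2Traj S g (toPrim T ω) t) := fun ω' => propext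
      ⟨fun h => ⟨h.2.1, h.1⟩, fun h => ⟨h.2, h.1, (hC _ _ h.2).1 hCω⟩⟩
    have k2 : ∀ ω', (m2Traj S g (toPrim T ω') t = m2Traj S g (toPrim T ω) t ∧ C ω') =
        (m2Traj S g (toPrim T ω') t = m2Traj S g (toPrim T ω) t) := fun ω' => propext
      ⟨fun h => h.1, fun h => ⟨h, (hC _ _ h).1 hCω⟩⟩
    simp only [k1, k2]
    exact this
  · have z : ∀ B : ΩT X W V1 V2 T → Prop, (∀ ω, B ω → C ω) →
        E P T (fun ω' => ind (m2Traj S g (toPrim T ω') t = m) * ind (B ω')) = 0 := by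
      intro B hB
      rw [E_congr P T _ (fun _ => 0)]
      · simp [E]
      · intro ω' hω'
        rw [← ind_and]
        unfold ind
        rw [if_neg]
        rintro ⟨a, b⟩
        exact hm ⟨ω', hω', hB _ b, a⟩
    rw [z _ (fun ω h => h.2), z _ (fun ω h => h), zero_mul]
end key

/-- Lemma 5 of the paper. There is a strategy-independent filter
`f̃²_t` with `Π²_{t+1} = f̃²_t (Π²_t, Γ_t^{[2,1]}, U²_t, Z²_{t+1})` along every
realization of positive probability; consequently, for every (Borel) set `P²` of
distributions, `P(Π²_{t+1} ∈ P² | M²_t, Γ_{0:t}^{[2,1]}) =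
P(Π²_{t+1} ∈ P² | Π²_t, U²_t, Γ_t^{[2,1]})`. -/
theorem infoState2_filter
    [∀ t, Fintype (X t)] [∀ t, Fintype (U1 t)] [∀ t, Fintype (U2 t)]
    [∀ t, Fintype (Y1 t)] [∀ t, Fintype (Y2 t)]
    (T : ℕ) (S : Sys X U1 U2 W V1 V2 Y1 Y2) (P : PrimPMF X W V1 V2) :
    ∃ ftil : ∀ t, (X t × Lp Y1 U1 t → ℝ) → ((X t → ℝ) → U1 t) → U2 t →
        (Y2 (t + 1) × U2 t) → (X (t + 1) × Lp Y1 U1 (t + 1) → ℝ),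
      ∀ (g : Strat U1 U2 Y1 Y2) (ψ : ∀ t, M2 Y2 U2 t → (X t → ℝ) → U1 t),
        Compat S g ψ P T →
        ∀ t, t < T → ∀ ω : ΩT X W V1 V2 T, 0 < mass P T ω →
          (infoState2 S g P T ω (t + 1) =
            ftil t (infoState2 S g P T ω t) (ψ t (m2Traj S g (toPrim T ω) t))
              (u2Traj S g (toPrim T ω) t) (z2Traj S g (toPrim T ω) t)) ∧
          ∀ P2 : Set (X (t + 1) × Lp Y1 U1 (t + 1) → ℝ),
            condProb (mass P T) (fun ω' => infoState2 S g P T ω' (t + 1) ∈ P2)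
              (fun ω' => m2Traj S g (toPrim T ω') t = m2Traj S g (toPrim T ω) t) =
            condProb (mass P T) (fun ω' => infoState2 S g P T ω' (t + 1) ∈ P2)
              (fun ω' => infoState2 S g P T ω' t = infoState2 S g P T ω t ∧
                u2Traj S g (toPrim T ω') t = u2Traj S g (toPrim T ω) t ∧
                ψ t (m2Traj S g (toPrim T ω') t) = ψ t (m2Traj S g (toPrim T ω) t)) := by
  refine ⟨fun t => filt S P t, ?_⟩
  intro g ψ hc t ht ω hω
  refine ⟨filt_eq S g P T ψ hc t ht ω hω, fun P2 => ?_⟩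
  rw [condProb_eq, condProb_eq]
  have hp1 := E_ind_pos P T (fun ω' => m2Traj S g (toPrim T ω') t = m2Traj S g (toPrim T ω) t)
    ω hω rfl
  have hp2 := E_ind_pos P T (fun ω' => infoState2 S g P T ω' t = infoState2 S g P T ω t ∧
                u2Traj S g (toPrim T ω') t = u2Traj S g (toPrim T ω) t ∧
                ψ t (m2Traj S g (toPrim T ω') t) = ψ t (m2Traj S g (toPrim T ω) t))
    ω hω ⟨rfl, rfl, rfl⟩
  rw [cond_eq S g P T ψ hc t ht ω hω P2, mul_div_cancel_left₀ _ hp1.ne', eq_comm,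
    div_eq_iff hp2.ne', mul_comm (Kop _ _ _ _ _ _ _)]
  apply class_eq S g P T t
  · intro ω1 ω2 h
    have e1 : u2Traj S g (toPrim T ω2) t = u2Traj S g (toPrim T ω1) t := by
      unfold u2Traj; rw [h]
    have e3 : infoState2 S g P T ω2 t = infoState2 S g P T ω1 t := by
      unfold infoState2; rw [h]
    rw [e1, e3, h]
  · rintro ω1 hω1 ⟨a, b, c⟩
    rw [cond_eq S g P T ψ hc t ht ω1 hω1 P2, a, b, c]

end

end NestedTeam
end

section
/- For each time t = 0,…,T: (1) there exists a function c̃_t^1 such that E^g[c_t(X_t, U_t^1, U_t^2) | M_t^1, U_t^1, U_t^2] = c̃_t^1(Π_t^1, U_t^1, U_t^2) at every realization of positive probability; explicitly c̃_t^1(π, u¹, u²) = Σ_{x ∈ 𝒳_t} c_t(x, u¹, u²)·π(x); and (2) there exists a function c̃_t^2 such that E^g[c̃_t^1(Π_t^1, U_t^1, U_t^2) | M_t^2, Γ_t^{[2,1]}, U_t^2] = c̃_t^2(Π_t^2, Γ_t^{[2,1]}, U_t^2) at every realization of positive probability. -/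
/-!
Common framework: a two-agent sequential dynamic team with nested information
structure (Dave & Malikopoulos, "Structural results for decentralized
stochastic control with a nested information structure").

* `X t` : state space at time `t`; `U1 t`, `U2 t` : action spaces of agents 1 and 2;
* `W t` : disturbance; `V1 t`, `V2 t` : measurement noises; `Y1 t`, `Y2 t` : observations.
* Dynamics `X_{t+1} = f t X_t U¹_t U²_t W_t`, observations `Y^k_t = h^k t X_t V^k_t`.
* Memories `M²_t = (Y²_{0:t}, U²_{0:t-1})`, `L_t^{[1,2]} = (Y¹_{0:t}, U¹_{0:t-1})`,
  `M¹_t = (L_t^{[1,2]}, M²_t)` (nested information).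
* The primitive random variables are independent with given PMFs; the sample
  space for horizon `T` is `ΩT`, with the product mass function `mass`.
-/

open scoped Classical
open Finset

namespace NestedTeam

noncomputable section

variable {X U1 U2 W V1 V2 Y1 Y2 : ℕ → Type}

variable [Fintype (X 0)] [∀ t, Fintype (W t)] [∀ t, Fintype (V1 t)] [∀ t, Fintype (V2 t)]
variable [∀ t, Inhabited (W t)] [∀ t, Inhabited (V1 t)] [∀ t, Inhabited (V2 t)]

lemma sum_fiber {Ω : Type*} [Fintype Ω] {A : Type*} [Fintype A] (p : Ω → ℝ) (B : Ω → Prop)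
    (a : Ω → A) (G : A → ℝ) :
    (∑ ω, if B ω then p ω * G (a ω) else 0) =
      ∑ x, (∑ ω, if a ω = x ∧ B ω then p ω else 0) * G x := by
  simp_rw [Finset.sum_mul]
  rw [Finset.sum_comm]
  refine Finset.sum_congr rfl fun ω _ => ?_
  rw [Finset.sum_eq_single (a ω)]
  · by_cases h : B ω <;> simp [h]
  · intro b _ hb
    simp [Ne.symm hb]
  · simp

lemma condExp_fiber {Ω : Type*} [Fintype Ω] {A : Type*} [Fintype A] (p : Ω → ℝ)
    (B : Ω → Prop) (a : Ω → A) (G : A → ℝ) :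
    condExp p (fun ω => G (a ω)) B = ∑ x, G x * condProb p (fun ω => a ω = x) B := by
  unfold condExp condProb
  rw [sum_fiber, Finset.sum_div]
  refine Finset.sum_congr rfl fun x _ => ?_
  ring

lemma condExp_congr {Ω : Type*} [Fintype Ω] (p F G : Ω → ℝ) (B C : Ω → Prop)
    (hBC : ∀ ω, B ω ↔ C ω) (h : ∀ ω, C ω → p ω ≠ 0 → F ω = G ω) :
    condExp p F B = condExp p G C := by
  obtain rfl : B = C := funext fun ω => propext (hBC ω)
  unfold condExp
  congr 1
  refine Finset.sum_congr rfl fun ω _ => ?_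
  by_cases hB : B ω
  · by_cases hp : p ω = 0
    · simp [hp]
    · simp [hB, h ω hB hp]
  · simp [hB]

lemma sum_condProb {Ω : Type*} [Fintype Ω] {A L : Type*} [Fintype A] (p : Ω → ℝ)
    (B : Ω → Prop) (a : Ω → A) (b : Ω → L) (l : L) :
    ∑ x, condProb p (fun ω => (a ω, b ω) = (x, l)) B = condProb p (fun ω => b ω = l) B := by
  unfold condProb
  rw [← Finset.sum_div]
  congr 1
  rw [Finset.sum_comm]
  refine Finset.sum_congr rfl fun ω _ => ?_
  rw [Finset.sum_eq_single (a ω)]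
  · simp
  · intro c _ hc
    simp [Ne.symm hc]
  · simp

lemma condProb_ratio {Ω : Type*} [Fintype Ω] {A L M : Type*} (p : Ω → ℝ)
    (a : Ω → A) (b : Ω → L) (c : Ω → M) (x : A) (l : L) (m : M)
    (hD : (∑ ω, if c ω = m then p ω else 0) ≠ 0) :
    condProb p (fun ω => a ω = x) (fun ω => (b ω, c ω) = (l, m)) =
      condProb p (fun ω => (a ω, b ω) = (x, l)) (fun ω => c ω = m) /
        condProb p (fun ω => b ω = l) (fun ω => c ω = m) := by
  unfold condProb
  rw [div_div_div_cancel_right₀ hD]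
  simp only [Prod.mk.injEq, and_assoc]

/-- Lemma 7 of the paper. (1) At every realization of positive
probability, `E[c_t(X_t,U¹_t,U²_t) | M¹_t, U¹_t, U²_t] = c̃¹_t(Π¹_t,U¹_t,U²_t)`
with the explicit `c̃¹_t(π,u¹,u²) = Σ_x c_t(x,u¹,u²)·π(x)`; and (2) there is a
function `c̃²_t` with
`E[c̃¹_t(Π¹_t,U¹_t,U²_t) | M²_t, Γ_t^{[2,1]}, U²_t] = c̃²_t(Π²_t,Γ_t^{[2,1]},U²_t)`
at every realization of positive probability. -/
theorem conditional_costs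
    [∀ t, Fintype (X t)] [∀ t, Fintype (U1 t)] [∀ t, Fintype (U2 t)]
    [∀ t, Fintype (Y1 t)] [∀ t, Fintype (Y2 t)]
    (T : ℕ) (S : Sys X U1 U2 W V1 V2 Y1 Y2) (P : PrimPMF X W V1 V2)
    (g : Strat U1 U2 Y1 Y2) (ψ : ∀ t, M2 Y2 U2 t → (X t → ℝ) → U1 t)
    (hcompat : Compat S g ψ P T) :
    (∀ t, t ≤ T → ∀ ω : ΩT X W V1 V2 T, 0 < mass P T ω →
      condExp (mass P T)
        (fun ω' => S.c t (xTraj S g (toPrim T ω') t) (u1Traj S g (toPrim T ω') t)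
          (u2Traj S g (toPrim T ω') t))
        (fun ω' => m1Traj S g (toPrim T ω') t = m1Traj S g (toPrim T ω) t ∧
          u1Traj S g (toPrim T ω') t = u1Traj S g (toPrim T ω) t ∧
          u2Traj S g (toPrim T ω') t = u2Traj S g (toPrim T ω) t) =
      ∑ x, S.c t x (u1Traj S g (toPrim T ω) t) (u2Traj S g (toPrim T ω) t) *
        infoState1 S g P T ω t x) ∧
    (∃ ctil2 : ∀ t, (X t × Lp Y1 U1 t → ℝ) → ((X t → ℝ) → U1 t) → U2 t → ℝ,
      ∀ t, t ≤ T → ∀ ω : ΩT X W V1 V2 T, 0 < mass P T ω →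
        condExp (mass P T)
          (fun ω' => ∑ x, S.c t x (u1Traj S g (toPrim T ω') t)
            (u2Traj S g (toPrim T ω') t) * infoState1 S g P T ω' t x)
          (fun ω' => m2Traj S g (toPrim T ω') t = m2Traj S g (toPrim T ω) t ∧
            ψ t (m2Traj S g (toPrim T ω') t) = ψ t (m2Traj S g (toPrim T ω) t) ∧
            u2Traj S g (toPrim T ω') t = u2Traj S g (toPrim T ω) t) =
        ctil2 t (infoState2 S g P T ω t) (ψ t (m2Traj S g (toPrim T ω) t))
          (u2Traj S g (toPrim T ω) t)) := by
  refine ⟨?_, ?_⟩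
  · intro t _ ω _
    unfold infoState1
    rw [← condExp_fiber (mass P T) _ (fun ω' => xTraj S g (toPrim T ω') t)
      (fun x => S.c t x (u1Traj S g (toPrim T ω) t) (u2Traj S g (toPrim T ω) t))]
    have key : ∀ ω' : ΩT X W V1 V2 T,
        m1Traj S g (toPrim T ω') t = m1Traj S g (toPrim T ω) t →
        u1Traj S g (toPrim T ω') t = u1Traj S g (toPrim T ω) t ∧
          u2Traj S g (toPrim T ω') t = u2Traj S g (toPrim T ω) t := by
      intro ω' h
      refine ⟨by unfold u1Traj; rw [h], ?_⟩
      have h2 : m2Traj S g (toPrim T ω') t = m2Traj S g (toPrim T ω) t := congrArg Prod.snd h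
      unfold u2Traj
      rw [h2]
    refine condExp_congr _ _ _ _ _ (fun ω' => ⟨fun h => h.1, fun h => ⟨h, key ω' h⟩⟩) ?_
    intro ω' h _
    simp only [(key ω' h).1, (key ω' h).2]
  · refine ⟨fun t π γ u => ∑ l, (∑ x, S.c t x (γ (eMap t π l)) u * eMap t π l x) *
      ∑ x', π (x', l), ?_⟩
    intro t ht ω hω
    set m := m2Traj S g (toPrim T ω) t with hm
    have hD : (∑ ω' : ΩT X W V1 V2 T,
        if m2Traj S g (toPrim T ω') t = m then mass P T ω' else 0) ≠ 0 := by
      apply ne_of_gt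
      refine Finset.sum_pos' (fun ω' _ => ?_) ⟨ω, Finset.mem_univ _, ?_⟩
      · split_ifs
        · exact mass_nonneg P T ω'
        · exact le_rfl
      · simpa [hm] using hω
    have hs : ∀ l, ∑ x', infoState2 S g P T ω t (x', l) =
        condProb (mass P T) (fun ω' => lpTraj S g (toPrim T ω') t = l)
          (fun ω' => m2Traj S g (toPrim T ω') t = m) := by
      intro l
      unfold infoState2
      exact sum_condProb _ _ _ _ _
    have he : ∀ ω' : ΩT X W V1 V2 T, m2Traj S g (toPrim T ω') t = m →
        infoState1 S g P T ω' t =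
          eMap t (infoState2 S g P T ω t) (lpTraj S g (toPrim T ω') t) := by
      intro ω' h
      funext x
      unfold eMap
      rw [hs]
      unfold infoState1 infoState2 m1Traj
      rw [h]
      exact condProb_ratio _ _ _ _ _ _ _ (by convert hD)
    simp only [hs]
    rw [← condExp_fiber (mass P T) _ (fun ω' => lpTraj S g (toPrim T ω') t)
      (fun l => ∑ x, S.c t x (ψ t m (eMap t (infoState2 S g P T ω t) l))
        (u2Traj S g (toPrim T ω) t) * eMap t (infoState2 S g P T ω t) l x)]
    have key : ∀ ω' : ΩT X W V1 V2 T, m2Traj S g (toPrim T ω') t = m →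
        u2Traj S g (toPrim T ω') t = u2Traj S g (toPrim T ω) t := by
      intro ω' h
      unfold u2Traj
      rw [h]
    refine condExp_congr _ _ _ _ _
      (fun ω' => ⟨fun h => h.1, fun h => ⟨h, by rw [h], key ω' h⟩⟩) ?_
    intro ω' h hp
    have hu := hcompat t ht ω' (lt_of_le_of_ne (mass_nonneg P T ω') (Ne.symm hp))
    simp only [hu, key ω' h, h, he ω' h]

end

end NestedTeam
end
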